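/- arXiv:0704.2206 — 4 statements merged into one kernel-verified Lean document; each statement's English description precedes it below -/
import Mathlib

section
/- Let P be a set of prime numbers, G' a finite group, G a subgroup of G', and Q₀ a P-permitted subgroup of G. Let C := {x Q₀ x⁻¹ : x ∈ G} and C' := {y Q₀ y⁻¹ : y ∈ G'} be the conjugacy classes of Q₀ under G and G' respectively (as sets of subgroups of G'), and assume |C| · |G'| = |C'| · |G|. Then for every g' ∈ G': if Ppart_P(⟨g'⟩) ∈ C' then the number of elements h ∈ G' with Ppart_P(⟨h g' h⁻¹⟩) ∈ C equals |G|, and if Ppart_P(⟨g'⟩) ∉ C' then this number is 0. (Equivalently, the induced class function Ind_G^{G'} α_C equals α_{C'}.) -/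
/-- An element `x` of finite order is `P`-torsion if every prime factor of its order lies
in the set of primes `P`. -/
def IsPTorsion (P : Set ℕ) {G : Type*} [Group G] (x : G) : Prop :=
  ∀ p : ℕ, p.Prime → p ∣ orderOf x → p ∈ P

/-- The `P`-part of a subgroup `Q`: the subgroup generated by the `P`-torsion elements of
`Q` (for finite cyclic `Q` this is exactly the set of `P`-torsion elements of `Q`). -/
def Ppart (P : Set ℕ) {G : Type*} [Group G] (Q : Subgroup G) : Subgroup G :=
  Subgroup.closure {x : G | x ∈ Q ∧ IsPTorsion P x}

/-- A subgroup `Q` of `G` is `P`-permitted if it is (finite) cyclic and every prime factor of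
its order lies in `P`. -/
def IsPermitted (P : Set ℕ) {G : Type*} [Group G] (Q : Subgroup G) : Prop :=
  IsCyclic Q ∧ ∀ p : ℕ, p.Prime → p ∣ Nat.card Q → p ∈ P

/-- The conjugate subgroup `x H x⁻¹`. -/
def conjSub {G' : Type*} [Group G'] (x : G') (H : Subgroup G') : Subgroup G' :=
  Subgroup.map (MulAut.conj x).toMonoidHom H

theorem aux_conjSub_mul {G' : Type*} [Group G'] (x y : G') (H : Subgroup G') :
    conjSub (x * y) H = conjSub x (conjSub y H) := by
  unfold conjSub
  rw [Subgroup.map_map]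
  congr 1
  ext z
  simp

theorem aux_conjSub_one {G' : Type*} [Group G'] (H : Subgroup G') :
    conjSub 1 H = H := by
  unfold conjSub
  ext z
  simp [Subgroup.mem_map]

theorem aux_Ppart {G' : Type*} [Group G'] (P : Set ℕ) (h g : G') :
    Ppart P (Subgroup.zpowers (h * g * h⁻¹)) = conjSub h (Ppart P (Subgroup.zpowers g)) := by
  have hz : Subgroup.zpowers (h * g * h⁻¹) = conjSub h (Subgroup.zpowers g) := by
    unfold conjSub
    rw [MonoidHom.map_zpowers]
    simp
  rw [hz]
  unfold conjSub Ppart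
  rw [MonoidHom.map_closure]
  congr 1
  have ho : ∀ x : G', orderOf ((MulAut.conj h).toMonoidHom x) = orderOf x := fun x =>
    orderOf_injective _ (MulAut.conj h).injective x
  ext z
  constructor
  · rintro ⟨⟨x, hx, rfl⟩, ht⟩
    refine ⟨x, ⟨hx, ?_⟩, rfl⟩
    unfold IsPTorsion at ht ⊢
    rwa [ho] at ht
  · rintro ⟨x, ⟨hx, ht⟩, rfl⟩
    refine ⟨⟨x, hx, rfl⟩, ?_⟩
    unfold IsPTorsion at ht ⊢
    rwa [ho]

theorem aux_count {G' : Type*} [Group G'] (Q : Subgroup G') (D : Set (Subgroup G'))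
    (hD : ∀ H ∈ D, ∃ y : G', H = conjSub y Q) :
    Nat.card {k : G' | conjSub k Q ∈ D} = Nat.card D * Nat.card {k : G' | conjSub k Q = Q} := by
  choose! f hf using hD
  rw [← Nat.card_prod]
  refine Nat.card_congr
    { toFun := fun k => (⟨conjSub k.1 Q, k.2⟩, ⟨(f (conjSub k.1 Q))⁻¹ * k.1, ?_⟩)
      invFun := fun p => ⟨f p.1.1 * p.2.1, ?_⟩
      left_inv := ?_
      right_inv := ?_ }
  · have := hf _ k.2
    show conjSub _ _ = _
    generalize f (conjSub k.1 Q) = a at this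
    rw [aux_conjSub_mul, this, ← aux_conjSub_mul, inv_mul_cancel, aux_conjSub_one]
  · show conjSub _ _ ∈ D
    rw [aux_conjSub_mul, show conjSub p.2.1 Q = Q from p.2.2, ← hf _ p.1.2]
    exact p.1.2
  · intro k
    simp
  · rintro ⟨⟨d, hd⟩, ⟨n, hn⟩⟩
    have hn' : conjSub n Q = Q := hn
    have : conjSub (f d * n) Q = d := by
      rw [aux_conjSub_mul, hn', ← hf _ hd]
    simp [this]

/- `Ind_G^{G'} α_C = α_{C'}`: with `C`, `C'` the conjugacy classes of a `P`-permitted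
subgroup `Q₀ ≤ G` under `G` resp. `G'`, and assuming `|C|·|G'| = |C'|·|G|`, for every
`g' ∈ G'`: if `Ppart ⟨g'⟩ ∈ C'` then `#{h ∈ G' | Ppart ⟨h g' h⁻¹⟩ ∈ C} = |G|`, and if
`Ppart ⟨g'⟩ ∉ C'` then this number is `0`. -/
theorem stmt5 (P : Set ℕ) (hP : ∀ p ∈ P, p.Prime) {G' : Type*} [Group G'] [Finite G']
    (G : Subgroup G') (Q₀ : Subgroup G') (hQ₀G : Q₀ ≤ G) (hQ₀ : IsPermitted P Q₀)
    (C C' : Set (Subgroup G'))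
    (hCdef : C = {H : Subgroup G' | ∃ x ∈ G, H = conjSub x Q₀})
    (hC'def : C' = {H : Subgroup G' | ∃ y : G', H = conjSub y Q₀})
    (hcard : Nat.card C * Nat.card G' = Nat.card C' * Nat.card G) :
    ∀ g' : G',
      (Ppart P (Subgroup.zpowers g') ∈ C' →
        Nat.card {h : G' | Ppart P (Subgroup.zpowers (h * g' * h⁻¹)) ∈ C} = Nat.card G) ∧
      (Ppart P (Subgroup.zpowers g') ∉ C' →
        Nat.card {h : G' | Ppart P (Subgroup.zpowers (h * g' * h⁻¹)) ∈ C} = 0) := by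
  intro g'
  simp only [aux_Ppart]
  constructor
  · intro hg
    have hg2 := hg
    rw [hC'def] at hg2
    obtain ⟨y, hy⟩ := hg2
    rw [hy]
    have e1 : Nat.card {h : G' | conjSub h (conjSub y Q₀) ∈ C}
        = Nat.card {k : G' | conjSub k Q₀ ∈ C} := by
      refine Nat.card_congr ((Equiv.mulRight y).subtypeEquiv ?_)
      intro h
      simp [aux_conjSub_mul]
    have e2 := aux_count Q₀ C (by
      rw [hCdef]
      rintro H ⟨x, _, hx⟩
      exact ⟨x, hx⟩)
    have e3 := aux_count Q₀ C' (by
      rw [hC'def]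
      rintro H hH
      exact hH)
    have e4 : {k : G' | conjSub k Q₀ ∈ C'} = Set.univ := by
      ext k
      simp only [hC'def]
      exact ⟨fun _ => trivial, fun _ => ⟨k, rfl⟩⟩
    rw [e4, Nat.card_univ] at e3
    have hpos : 0 < Nat.card C' := by
      haveI : Nonempty C' := ⟨⟨_, hg⟩⟩
      exact Nat.card_pos
    rw [e1, e2]
    apply Nat.eq_of_mul_eq_mul_left hpos
    rw [← hcard, e3]
    ring
  · intro hg
    have : {h : G' | conjSub h (Ppart P (Subgroup.zpowers g')) ∈ C} = ∅ := by
      ext h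
      simp only [Set.mem_setOf_eq, Set.mem_empty_iff_false, iff_false]
      intro hh
      apply hg
      rw [hCdef] at hh
      obtain ⟨x, _, hx⟩ := hh
      rw [hC'def]
      refine ⟨h⁻¹ * x, ?_⟩
      rw [aux_conjSub_mul, ← hx, ← aux_conjSub_mul, inv_mul_cancel, aux_conjSub_one]
    rw [this]
    simp
end

section
/- Let P be a set of prime numbers, let H be a finite group with the discrete topology, and let ρ, ρ' : Γ_P → H be continuous group homomorphisms with the same range (image subgroup). Then there is an automorphism α of the common range R with ρ = α ∘ ρ', and consequently for every subgroup S of Γ_P the images coincide: ρ(S) = ρ'(S). -/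
instance (p : Nat.Primes) : Fact (p : ℕ).Prime := ⟨p.2⟩

/-- For a set `P` of primes, `Γ_P = ∏_{p ∈ P} ℤ_p`, the product of the additive groups of
`p`-adic integers over `p ∈ P`, with the product topology. -/
abbrev Gamma (P : Set Nat.Primes) : Type :=
  (p : P) → ℤ_[(p : Nat.Primes)]

theorem padic_local (p : ℕ) [hp : Fact p.Prime] (n : ℕ) (hn : n ≠ 0) (x : ℤ_[p]) (k : ℕ)
    (hk : k ≡ x.appr (n.factorization p) [MOD p ^ n.factorization p]) :
    (n : ℤ_[p]) ∣ x - k := by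
  have h1 : (p : ℤ_[p]) ^ n.factorization p ∣ x - x.appr (n.factorization p) :=
    Ideal.mem_span_singleton.mp (PadicInt.appr_spec _ x)
  have h2 : (p : ℤ_[p]) ^ n.factorization p ∣ (x.appr (n.factorization p) : ℤ_[p]) - k := by
    have h3 := (PadicInt.pow_p_dvd_int_iff (p := p) (n.factorization p)
      ((x.appr (n.factorization p) : ℤ) - k)).mpr (by
        have := (Nat.modEq_iff_dvd).mp hk
        exact_mod_cast this)
    simpa using h3
  have h4 : (p : ℤ_[p]) ^ n.factorization p ∣ x - k := by
    have := dvd_add h1 h2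
    simpa using this
  have hu : IsUnit ((n / p ^ n.factorization p : ℕ) : ℤ_[p]) := by
    rw [PadicInt.isUnit_iff, PadicInt.norm_natCast_eq_one_iff]
    exact (hp.out.coprime_iff_not_dvd).mpr (Nat.not_dvd_ordCompl hp.out hn)
  have he : (n : ℤ_[p]) = (p : ℤ_[p]) ^ n.factorization p *
      ((n / p ^ n.factorization p : ℕ) : ℤ_[p]) := by
    rw [← Nat.cast_pow, ← Nat.cast_mul, Nat.ordProj_mul_ordCompl_eq_self]
  rw [he]
  exact hu.mul_right_dvd.mpr h4

theorem gamma_decomp (P : Set Nat.Primes) (n : ℕ) (hn : n ≠ 0) (x : Gamma P) :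
    ∃ (k : ℕ) (y : Gamma P), x = k • (1 : Gamma P) + n • y := by
  classical
  have hfin : {p : P | ((p : Nat.Primes) : ℕ) ∣ n}.Finite := by
    refine Set.Finite.of_finite_image (f := fun p : P => ((p : Nat.Primes) : ℕ))
      ((Nat.divisors n).finite_toSet.subset ?_) ?_
    · rintro _ ⟨p, hp, rfl⟩
      simpa using ⟨hp, hn⟩
    · intro a _ b _ h
      exact Subtype.ext (Subtype.ext h)
  obtain ⟨k, hk⟩ := Nat.chineseRemainderOfFinset
    (fun p : P => (x p).appr (n.factorization ((p : Nat.Primes) : ℕ)))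
    (fun p : P => ((p : Nat.Primes) : ℕ) ^ n.factorization ((p : Nat.Primes) : ℕ))
    hfin.toFinset (fun p _ => pow_ne_zero _ p.1.2.ne_zero) (by
      intro a _ b _ hab
      refine Nat.Coprime.pow _ _ ((Nat.coprime_primes a.1.2 b.1.2).mpr ?_)
      intro h
      exact hab (Subtype.ext (Subtype.ext h)))
  have key : ∀ p : P, ∃ y : ℤ_[(p : Nat.Primes)], x p - k = n * y := by
    intro p
    refine padic_local _ n hn (x p) k ?_
    by_cases h : ((p : Nat.Primes) : ℕ) ∣ n
    · exact hk p (by simpa using h)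
    · rw [Nat.factorization_eq_zero_of_not_dvd h, pow_zero]
      exact Nat.modEq_one
  choose y hy using key
  refine ⟨k, y, ?_⟩
  funext p
  have := hy p
  change x p = k • (1 : ℤ_[(p : Nat.Primes)]) + n • y p
  rw [nsmul_eq_mul, nsmul_eq_mul, ← this]
  ring

theorem gamma_multiple (P : Set Nat.Primes) {H : Type*} [AddGroup H] [Finite H]
    (ρ ρ' : Gamma P →+ H) (hr : ρ.range ≤ ρ'.range) :
    ∃ m : ℕ, ∀ x, ρ x = m • ρ' x := by
  have ev : ∀ x : Gamma P, ∃ k : ℕ, ∀ f : Gamma P →+ H, f x = k • f 1 := by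
    intro x
    obtain ⟨k, y, rfl⟩ := gamma_decomp P (Nat.card H) Nat.card_pos.ne' x
    refine ⟨k, fun f => ?_⟩
    rw [map_add, map_nsmul, map_nsmul, card_nsmul_eq_zero', add_zero]
  obtain ⟨z, hz⟩ := hr (AddMonoidHom.mem_range.mpr ⟨1, rfl⟩ : ρ 1 ∈ ρ.range)
  obtain ⟨m, hm⟩ := ev z
  refine ⟨m, fun x => ?_⟩
  obtain ⟨k, hk⟩ := ev x
  rw [hk ρ, hk ρ', ← hz, hm ρ', ← mul_nsmul, ← mul_nsmul, mul_comm]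

/-- If two continuous homomorphisms `ρ, ρ' : Γ_P → H` into a finite discrete group have the
same range `R`, then `ρ = α ∘ ρ'` for some automorphism `α` of `R`, and consequently
`ρ(S) = ρ'(S)` for every subgroup `S` of `Γ_P`. -/
theorem stmt13 (P : Set Nat.Primes) {H : Type*} [AddGroup H] [Finite H]
    [TopologicalSpace H] [DiscreteTopology H]
    (ρ ρ' : Gamma P →+ H) (hρ : Continuous ρ) (hρ' : Continuous ρ')
    (hr : ρ.range = ρ'.range) :
    (∃ α : ρ'.range ≃+ ρ'.range,
      ∀ x : Gamma P,
        ρ x = (α ⟨ρ' x, AddMonoidHom.mem_range.mpr ⟨x, rfl⟩⟩ : ρ'.range)) ∧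
    ∀ S : AddSubgroup (Gamma P), S.map ρ = S.map ρ' := by
  obtain ⟨m, hm⟩ := gamma_multiple P ρ ρ' hr.le
  obtain ⟨m', hm'⟩ := gamma_multiple P ρ' ρ hr.ge
  refine ⟨⟨{ toFun := fun y => m • y
             invFun := fun y => m' • y
             left_inv := ?_
             right_inv := ?_
             map_add' := ?_ }, fun x => hm x⟩, fun S => ?_⟩
  · rintro ⟨_, x, rfl⟩
    apply Subtype.ext
    change m' • m • ρ' x = ρ' x
    rw [← hm, ← hm']
  · rintro ⟨_, x, rfl⟩
    apply Subtype.ext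
    change m • m' • ρ' x = ρ' x
    rw [← map_nsmul, ← hm, map_nsmul, ← hm']
  · rintro ⟨_, x, rfl⟩ ⟨_, y, rfl⟩
    apply Subtype.ext
    change m • (ρ' x + ρ' y) = m • ρ' x + m • ρ' y
    rw [← map_add, ← hm, ← hm, ← hm, map_add]
  · apply le_antisymm
    · rintro _ ⟨x, hx, rfl⟩
      exact ⟨m • x, S.nsmul_mem hx m, by rw [map_nsmul, hm]⟩
    · rintro _ ⟨x, hx, rfl⟩
      exact ⟨m' • x, S.nsmul_mem hx m', by rw [map_nsmul, hm']⟩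
end

section
/- Let P₂ ⊆ P₁ be sets of prime numbers, let Γ := Γ_{P₁} = ∏_{p∈P₁} ℤ_p, and let Γ₂ := {x ∈ Γ : x_p = 0 for all p ∈ P₁ \ P₂} be the direct factor of Γ corresponding to P₂. Let H be a finite group with the discrete topology and ρ : Γ → H a continuous group homomorphism with range R. Then ρ(Γ₂) = Ppart_{P₂}(R), the P₂-part of the range, i.e. ρ(Γ₂) = {y ∈ R : every prime factor of the order of y lies in P₂}. -/
theorem aux_divis (P₁ P : Set Nat.Primes) (x : Gamma P₁)
    (hx : ∀ p : P₁, (p : Nat.Primes) ∉ P → x p = 0) (q : Nat.Primes) (hq : q ∉ P) (a : ℕ) :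
    ∃ z : Gamma P₁, x = ((q : ℕ) ^ a) • z := by
  have : ∀ p : P₁, ∃ w : ℤ_[(p : Nat.Primes)], x p = ((q : ℕ) ^ a) • w := by
    intro p
    by_cases hp : (p : Nat.Primes) ∈ P
    · have hne : (q : ℕ) ≠ ((p : Nat.Primes) : ℕ) := by
        intro h
        exact hq (by rw [Nat.Primes.coe_nat_injective h]; exact hp)
      have hu : IsUnit (((q : ℕ) : ℤ_[(p : Nat.Primes)])) := by
        rw [PadicInt.isUnit_iff]
        have h := (PadicInt.norm_natCast_eq_one_iff (p := (p : Nat.Primes)) (n := (q : ℕ))).2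
          ((Nat.coprime_primes (p : Nat.Primes).2 q.2).2 hne.symm)
        exact h
      obtain ⟨u, hu⟩ := (hu.pow a)
      refine ⟨(↑u⁻¹ : ℤ_[(p : Nat.Primes)]) * x p, ?_⟩
      rw [nsmul_eq_mul, Nat.cast_pow, ← hu, Units.mul_inv_cancel_left]
    · exact ⟨0, by rw [hx p hp, smul_zero]⟩
  choose z hz using this
  exact ⟨z, funext hz⟩

theorem aux_order (P₁ P : Set Nat.Primes) {H : Type*} [AddGroup H] [Finite H]
    (ρ : Gamma P₁ →+ H) (x : Gamma P₁)
    (hx : ∀ p : P₁, (p : Nat.Primes) ∉ P → x p = 0) (q : Nat.Primes)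
    (hd : (q : ℕ) ∣ addOrderOf (ρ x)) : q ∈ P := by
  by_contra hq
  obtain ⟨a, n', hn', hn⟩ := Nat.exists_eq_pow_mul_and_not_dvd
    (Nat.card_pos (α := H)).ne' (q : ℕ) q.2.ne_one
  obtain ⟨z, hz⟩ := aux_divis P₁ P x hx q hq a
  apply hn'
  refine hd.trans (addOrderOf_dvd_of_nsmul_eq_zero ?_)
  rw [hz, map_nsmul, smul_smul, mul_comm, ← hn]
  exact card_nsmul_eq_zero'

theorem stmt14 (P₁ P₂ : Set Nat.Primes) (hP : P₂ ⊆ P₁) {H : Type*} [AddGroup H] [Finite H]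
    [TopologicalSpace H] [DiscreteTopology H]
    (ρ : Gamma P₁ →+ H) (hρ : Continuous ρ) :
    ⇑ρ '' {x : Gamma P₁ | ∀ p : P₁, (p : Nat.Primes) ∉ P₂ → x p = 0}
      = {y : H | y ∈ Set.range ρ ∧ ∀ q : Nat.Primes, (q : ℕ) ∣ addOrderOf y → q ∈ P₂} := by
  classical
  ext y
  constructor
  · rintro ⟨x, hx, rfl⟩
    exact ⟨⟨x, rfl⟩, fun q hq => aux_order P₁ P₂ ρ x hx q hq⟩
  · rintro ⟨⟨x, rfl⟩, hy⟩
    let x2 : Gamma P₁ := fun p => if (p : Nat.Primes) ∈ P₂ then x p else 0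
    have hx2 : ∀ p : P₁, (p : Nat.Primes) ∉ P₂ → x2 p = 0 := fun p hp => if_neg hp
    have hx' : ∀ p : P₁, (p : Nat.Primes) ∉ P₂ᶜ → (x - x2) p = 0 := by
      intro p hp
      have hp' : (p : Nat.Primes) ∈ P₂ := by simpa using hp
      simp [x2, hp']
    refine ⟨x2, hx2, ?_⟩
    have hm : addOrderOf (ρ (x - x2)) ∣ addOrderOf (ρ x) * addOrderOf (ρ x2) := by
      apply addOrderOf_dvd_of_nsmul_eq_zero
      rw [← map_nsmul, nsmul_sub, map_sub, map_nsmul, map_nsmul, mul_nsmul,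
        addOrderOf_nsmul_eq_zero, mul_nsmul', addOrderOf_nsmul_eq_zero]
      simp
    have h1 : addOrderOf (ρ (x - x2)) = 1 := by
      by_contra hne
      obtain ⟨q, hq, hqd⟩ := Nat.exists_prime_and_dvd hne
      have hc := aux_order P₁ P₂ᶜ ρ _ hx' ⟨q, hq⟩ hqd
      rcases hq.dvd_mul.1 (hqd.trans hm) with h | h
      · exact hc (hy ⟨q, hq⟩ h)
      · exact hc (aux_order P₁ P₂ ρ x2 hx2 ⟨q, hq⟩ h)
    rw [AddMonoid.addOrderOf_eq_one_iff, map_sub, sub_eq_zero] at h1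
    exact h1.symm
end

section
/- Let P be a set of prime numbers, let Γ := Γ_P = ∏_{p∈P} ℤ_p, let Γ₂ be a subgroup of Γ, let G be a finite group with the discrete topology, and let C₂ be any set of subgroups of G. Define C₁ := {range(ρ') : ρ' is a continuous group homomorphism Γ → G with ρ'(Γ₂) ∈ C₂}. Then for every continuous group homomorphism ρ : Γ → G one has: range(ρ) ∈ C₁ if and only if ρ(Γ₂) ∈ C₂. -/
lemma gamma_prime_dvd (P : Set Nat.Primes) (q : ℕ) (hq : q.Prime) (x : Gamma P) :
    ∃ n : ℕ, (q : Gamma P) ∣ x - (n : Gamma P) := by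
  have key : ∀ (p : P) (y : ℤ_[(p : Nat.Primes)]), ((p : Nat.Primes) : ℕ) ≠ q →
      (q : ℤ_[(p : Nat.Primes)]) ∣ y := by
    intro p y hpq
    apply IsUnit.dvd
    rw [PadicInt.isUnit_iff, PadicInt.norm_natCast_eq_one_iff]
    exact (Nat.coprime_primes p.1.2 hq).2 hpq
  by_cases h : ∃ p : P, ((p : Nat.Primes) : ℕ) = q
  · obtain ⟨p, rfl⟩ := h
    obtain ⟨n, -, hn⟩ := PadicInt.exists_mem_range (x p)
    refine ⟨n, pi_dvd_iff.2 fun r => ?_⟩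
    by_cases hr : r = p
    · subst hr
      rw [PadicInt.maximalIdeal_eq_span_p, Ideal.mem_span_singleton] at hn
      simpa using hn
    · have := key r (x r - n) (fun h => hr (Subtype.ext (Subtype.ext h)))
      simpa using this
  · push Not at h
    exact ⟨0, pi_dvd_iff.2 fun r => by simpa using key r (x r) (h r)⟩

lemma gamma_dvd (P : Set Nat.Primes) (N : ℕ) (hN : N ≠ 0) :
    ∀ x : Gamma P, ∃ n : ℕ, (N : Gamma P) ∣ x - (n : Gamma P) := by
  induction N using Nat.recOnMul with
  | zero => exact absurd rfl hN
  | one => intro x; exact ⟨0, by simp⟩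
  | prime q hq => exact gamma_prime_dvd P q hq
  | mul a b iha ihb =>
    intro x
    obtain ⟨n, y, hy⟩ := iha (left_ne_zero_of_mul hN) x
    obtain ⟨m, z, hz⟩ := ihb (right_ne_zero_of_mul hN) y
    refine ⟨n + a * m, z, ?_⟩
    push_cast
    linear_combination hy + (a : Gamma P) * hz

lemma gamma_hom {P : Set Nat.Primes} {G : Type*} [AddGroup G] [Finite G] (x : Gamma P) :
    ∃ n : ℕ, ∀ ρ : Gamma P →+ G, ρ x = n • ρ 1 := by
  obtain ⟨n, y, hy⟩ := gamma_dvd P (Nat.card G) Nat.card_pos.ne' x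
  refine ⟨n, fun ρ => ?_⟩
  have hx : x = Nat.card G • y + n • (1 : Gamma P) := by
    rw [nsmul_eq_mul, nsmul_eq_mul]
    linear_combination hy
  rw [hx, map_add, map_nsmul, map_nsmul, card_nsmul_eq_zero', zero_add]

lemma gamma_map_le {P : Set Nat.Primes} (Γ₂ : AddSubgroup (Gamma P)) {G : Type*} [AddGroup G]
    [Finite G] (ρ ρ' : Gamma P →+ G) (h : ρ.range ≤ ρ'.range) : Γ₂.map ρ ≤ Γ₂.map ρ' := by
  rintro _ ⟨x, hx, rfl⟩
  obtain ⟨z, hz⟩ := h ⟨1, rfl⟩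
  obtain ⟨k, hk⟩ := gamma_hom (G := G) z
  obtain ⟨n, hn⟩ := gamma_hom (G := G) x
  refine ⟨k • x, Γ₂.nsmul_mem hx k, ?_⟩
  rw [map_nsmul, hn ρ', hn ρ, ← hz, hk ρ', ← mul_nsmul, ← mul_nsmul, mul_comm]

/-- Let `Γ₂` be a subgroup of `Γ := Γ_P`, `G` a finite discrete group, `C₂` a set of
subgroups of `G`, and `C₁ := {range ρ' : ρ' : Γ → G continuous with ρ'(Γ₂) ∈ C₂}`. Then for
every continuous homomorphism `ρ : Γ → G`: `range ρ ∈ C₁ ↔ ρ(Γ₂) ∈ C₂`. -/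
theorem stmt16 (P : Set Nat.Primes) (Γ₂ : AddSubgroup (Gamma P)) {G : Type*} [AddGroup G]
    [Finite G] [TopologicalSpace G] [DiscreteTopology G]
    (C₂ : Set (AddSubgroup G)) (C₁ : Set (AddSubgroup G))
    (hC₁ : C₁ = {R : AddSubgroup G |
      ∃ ρ' : Gamma P →+ G, Continuous ρ' ∧ ρ'.range = R ∧ Γ₂.map ρ' ∈ C₂}) :
    ∀ ρ : Gamma P →+ G, Continuous ρ → (ρ.range ∈ C₁ ↔ Γ₂.map ρ ∈ C₂) := by
  intro ρ hρ
  subst hC₁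
  constructor
  · rintro ⟨ρ', -, hr, hm⟩
    rwa [le_antisymm (gamma_map_le Γ₂ ρ ρ' hr.ge) (gamma_map_le Γ₂ ρ' ρ hr.le)]
  · intro h
    exact ⟨ρ, hρ, rfl, h⟩
end
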